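/- arXiv:2604.04729 — 3 statements merged into one kernel-verified Lean document; each statement's English description precedes it below -/
import Mathlib

section
/- Let D = (V, E; c; s, t) be a flow network in which every arc belongs to at least one s-t path, and suppose the associated flow game Γ_D is convex. Then every arc e ∈ E is essential, i.e., γ(E) − γ(E ∖ {e}) > 0, and moreover every feasible flow f on E whose value equals γ(E) (i.e., every maximum flow of D) satisfies f(e) > 0 for every arc e ∈ E. -/
open scoped Classical
open Finset

noncomputable section

/-- The arcs (consecutive vertex pairs) of a vertex list. -/
def arcsOf {V : Type*} [DecidableEq V] (vs : List V) : Finset (V × V) :=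
  (vs.zip vs.tail).toFinset

/-- `vs` is the vertex list of a directed path from `a` to `b` using arcs of `E`,
with pairwise distinct vertices. -/
def IsPathList {V : Type*} (E : Finset (V × V)) (a b : V) (vs : List V) : Prop :=
  vs.Nodup ∧ vs.head? = some a ∧ vs.getLast? = some b ∧
    vs.Chain' (fun x y => (x, y) ∈ E)

/-- `P` is (the arc set of) an `s`-`t` path in the network with arc set `E`. -/
def IsSTPath {V : Type*} [DecidableEq V] (E : Finset (V × V)) (s t : V)
    (P : Finset (V × V)) : Prop :=
  ∃ vs : List V, IsPathList E s t vs ∧ P = arcsOf vs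

/-- The capacity of a path (arc set): the minimum capacity of its arcs. -/
def pathCap {V : Type*} (c : V × V → ℝ) (P : Finset (V × V)) : ℝ :=
  sInf (c '' (P : Set (V × V)))

/-- `e` is a bottleneck arc of some `s`-`t` path, i.e. `e ∈ B`. -/
def IsBottleneck {V : Type*} [DecidableEq V] (E : Finset (V × V)) (c : V × V → ℝ)
    (s t : V) (e : V × V) : Prop :=
  ∃ P : Finset (V × V), IsSTPath E s t P ∧ e ∈ P ∧ c e = pathCap c P

/-- The finite set `𝒫` of all `s`-`t` paths (as arc sets). -/
def stPaths {V : Type*} [DecidableEq V] (E : Finset (V × V)) (s t : V) :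
    Finset (Finset (V × V)) :=
  E.powerset.filter (fun P => IsSTPath E s t P)

/-- The value of a flow `f`: net flow out of the source `s`. -/
def flowValue {V : Type*} [DecidableEq V] (E : Finset (V × V)) (s : V)
    (f : V × V → ℝ) : ℝ :=
  ∑ e ∈ E.filter (fun e => e.1 = s), f e - ∑ e ∈ E.filter (fun e => e.2 = s), f e

/-- `f` is a feasible flow on the coalition `S`. -/
def IsFeasibleFlow {V : Type*} [DecidableEq V] (E : Finset (V × V)) (c : V × V → ℝ)
    (s t : V) (S : Finset (V × V)) (f : V × V → ℝ) : Prop :=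
  (∀ e ∈ E, 0 ≤ f e ∧ f e ≤ c e) ∧
  (∀ e, e ∉ S → f e = 0) ∧
  (∀ v, v ≠ s → v ≠ t →
    ∑ e ∈ E.filter (fun e => e.2 = v), f e = ∑ e ∈ E.filter (fun e => e.1 = v), f e)

/-- `γ` is the characteristic function of the flow game on `D = (V,E;c;s,t)`:
for each coalition `S ⊆ E`, `γ S` is the maximum value of a feasible flow on `S`. -/
def IsFlowGame {V : Type*} [DecidableEq V] (E : Finset (V × V)) (c : V × V → ℝ)
    (s t : V) (γ : Finset (V × V) → ℝ) : Prop :=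
  ∀ S : Finset (V × V), S ⊆ E →
    IsGreatest {x : ℝ | ∃ f, IsFeasibleFlow E c s t S f ∧ flowValue E s f = x} (γ S)

/-- The cooperative game `γ` with player set `E` is convex (supermodular). -/
def GameConvex {V : Type*} [DecidableEq V] (E : Finset (V × V))
    (γ : Finset (V × V) → ℝ) : Prop :=
  ∀ e ∈ E, ∀ S T : Finset (V × V), S ⊆ T → T ⊆ E.erase e →
    γ (insert e S) - γ S ≤ γ (insert e T) - γ T

/-- The directed graph with arc set `E` contains a directed cycle. -/
def HasDirectedCycle {V : Type*} (E : Finset (V × V)) : Prop :=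
  ∃ (v : V) (vs : List V), (v :: vs).Nodup ∧
    (v :: vs).Chain' (fun x y => (x, y) ∈ E) ∧
    ((v :: vs).getLast (List.cons_ne_nil v vs), v) ∈ E

theorem arcsOf_cons_cons {V : Type*} [DecidableEq V] (a b : V) (l : List V) (e : V × V) :
    e ∈ arcsOf (a :: b :: l) ↔ e = (a, b) ∨ e ∈ arcsOf (b :: l) := by
  simp [arcsOf]

theorem arcsOf_fst_mem {V : Type*} [DecidableEq V] (l : List V) (e : V × V)
    (h : e ∈ arcsOf l) : e.1 ∈ l := by
  obtain ⟨x, y⟩ := e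
  simp only [arcsOf, List.mem_toFinset] at h
  exact (List.of_mem_zip h).1

theorem arcsOf_subset {V : Type*} [DecidableEq V] (E : Finset (V × V)) (l : List V) :
    ∀ a, (a :: l).Chain' (fun x y => (x, y) ∈ E) → arcsOf (a :: l) ⊆ E := by
  induction l with
  | nil => intro a _ e he; simp [arcsOf] at he
  | cons b l ih =>
    intro a h e he
    rw [arcsOf_cons_cons] at he
    have h' := List.isChain_cons_cons.1 h
    rcases he with rfl | he
    · exact h'.1
    · exact ih b h'.2 he

theorem arcsOf_tele {V : Type*} [DecidableEq V] (g : V → ℝ) (l : List V) :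
    ∀ a b, (a :: l).Nodup → (a :: l).getLast? = some b →
      ∑ e ∈ arcsOf (a :: l), (g e.1 - g e.2) = g a - g b := by
  induction l with
  | nil => intro a b _ h; simp at h; simp [arcsOf, h]
  | cons x l ih =>
    intro a b hn h
    have hn' := List.nodup_cons.1 hn
    have hnot : (a, x) ∉ arcsOf (x :: l) := fun hh => hn'.1 (arcsOf_fst_mem _ _ hh)
    have he : arcsOf (a :: x :: l) = insert (a, x) (arcsOf (x :: l)) := by
      ext e; rw [arcsOf_cons_cons, Finset.mem_insert]
    rw [he, Finset.sum_insert hnot, ih x b hn'.2 (by simpa [List.getLast?_cons_cons] using h)]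
    ring

theorem arcsOf_cut {V : Type*} [DecidableEq V] (e0 : V × V) (l : List V) :
    ∀ a b, (a :: l).Nodup → (a :: l).getLast? = some b → e0 ∈ arcsOf (a :: l) →
      ∃ U : Finset V, a ∈ U ∧ b ∉ U ∧
        ∀ e ∈ arcsOf (a :: l), e ≠ e0 → e.1 ∈ U → e.2 ∈ U := by
  induction l with
  | nil => intro a b _ _ h; simp [arcsOf] at h
  | cons x l ih =>
    intro a b hn h he
    have hn' := List.nodup_cons.1 hn
    have hl : (x :: l).getLast? = some b := by simpa [List.getLast?_cons_cons] using h
    have hb : b ∈ x :: l := List.mem_of_getLast? hl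
    have hba : b ≠ a := fun hh => hn'.1 (hh ▸ hb)
    rw [arcsOf_cons_cons] at he
    rcases he with rfl | he
    · refine ⟨{a}, by simp, by simpa using hba, ?_⟩
      intro e he hne h1
      rw [arcsOf_cons_cons] at he
      rcases he with he | he
      · exact absurd he hne
      · exact absurd (Finset.mem_singleton.1 h1 ▸ arcsOf_fst_mem _ _ he) hn'.1
    · obtain ⟨U, h1, h2, h3⟩ := ih x b hn'.2 hl he
      refine ⟨insert a U, by simp, by simp [hba, h2], ?_⟩
      intro e he hne h4
      rw [arcsOf_cons_cons] at he
      rcases he with rfl | he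
      · simp [h1]
      · rcases Finset.mem_insert.1 h4 with h5 | h5
        · exact absurd (h5 ▸ arcsOf_fst_mem _ _ he) hn'.1
        · exact Finset.mem_insert_of_mem (h3 e he hne h5)

theorem net_eq {V : Type*} [DecidableEq V] (E : Finset (V × V)) (f : V × V → ℝ) (v : V) :
    ∑ e ∈ E.filter (fun e => e.1 = v), f e - ∑ e ∈ E.filter (fun e => e.2 = v), f e
      = ∑ e ∈ E, f e * ((if e.1 = v then 1 else 0) - (if e.2 = v then 1 else 0)) := by
  rw [Finset.sum_filter, Finset.sum_filter, ← Finset.sum_sub_distrib]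
  refine Finset.sum_congr rfl fun e _ => ?_
  split_ifs <;> ring

theorem cut_le {V : Type*} [DecidableEq V] (E : Finset (V × V)) (c : V × V → ℝ)
    (s t : V) (S : Finset (V × V)) (f : V × V → ℝ) (hf : IsFeasibleFlow E c s t S f)
    (U : Finset V) (hs : s ∈ U) (ht : t ∉ U) (hS : ∀ e ∈ S, e.1 ∈ U → e.2 ∈ U) :
    flowValue E s f ≤ 0 := by
  obtain ⟨h1, h2, h3⟩ := hf
  have key : flowValue E s f = ∑ v ∈ U,
      (∑ e ∈ E.filter (fun e => e.1 = v), f e - ∑ e ∈ E.filter (fun e => e.2 = v), f e) := by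
    rw [Finset.sum_eq_single_of_mem s hs]
    · rfl
    · intro v hv hvs
      have hvt : v ≠ t := fun hh => ht (hh ▸ hv)
      rw [h3 v hvs hvt, sub_self]
  rw [key]
  simp_rw [net_eq]
  rw [Finset.sum_comm]
  refine Finset.sum_nonpos fun e he => ?_
  rw [← Finset.mul_sum, Finset.sum_sub_distrib, Finset.sum_ite_eq, Finset.sum_ite_eq]
  by_cases heS : e ∈ S
  · refine mul_nonpos_of_nonneg_of_nonpos (h1 e he).1 ?_
    have := hS e heS
    split_ifs <;> simp_all
  · simp [h2 e heS]

theorem path_flow {V : Type*} [DecidableEq V] (E : Finset (V × V)) (c : V × V → ℝ)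
    (s t : V) (hst : s ≠ t) (hc : ∀ e ∈ E, 0 < c e) (l : List V)
    (hn : (s :: l).Nodup) (hl : (s :: l).getLast? = some t) (hE : arcsOf (s :: l) ⊆ E) :
    ∃ f, IsFeasibleFlow E c s t (arcsOf (s :: l)) f ∧ 0 < flowValue E s f := by
  obtain ⟨d, hd, hdc⟩ : ∃ d : ℝ, 0 < d ∧ ∀ e ∈ E, d ≤ c e := by
    rcases E.eq_empty_or_nonempty with h | h
    · exact ⟨1, one_pos, by simp [h]⟩
    · obtain ⟨m, hm, hmin⟩ := E.exists_min_image c h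
      exact ⟨c m, hc m hm, hmin⟩
  have net : ∀ v, ∑ e ∈ E.filter (fun e => e.1 = v), (if e ∈ arcsOf (s :: l) then d else 0)
      - ∑ e ∈ E.filter (fun e => e.2 = v), (if e ∈ arcsOf (s :: l) then d else 0)
      = d * ((if s = v then 1 else 0) - (if t = v then 1 else 0)) := by
    intro v
    rw [net_eq, ← arcsOf_tele (fun x => if x = v then (1 : ℝ) else 0) l s t hn hl, Finset.mul_sum]
    simp_rw [ite_mul, zero_mul]
    rw [← Finset.sum_filter]
    refine Finset.sum_congr ?_ fun _ _ => rfl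
    ext e
    simp only [Finset.mem_filter]
    exact ⟨fun h => h.2, fun h => ⟨hE h, h⟩⟩
  refine ⟨fun e => if e ∈ arcsOf (s :: l) then d else 0, ⟨?_, ?_, ?_⟩, ?_⟩
  · intro e he
    have := hdc e he
    dsimp only
    split_ifs
    · exact ⟨hd.le, this⟩
    · exact ⟨le_rfl, hd.le.trans this⟩
  · intro e he
    simp [he]
  · intro v hs ht
    have := net v
    rw [if_neg hs.symm, if_neg ht.symm, sub_self, mul_zero] at this
    exact (sub_eq_zero.1 this).symm
  · have := net s
    rw [if_pos rfl, if_neg hst.symm, sub_zero, mul_one] at this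
    unfold flowValue
    rw [this]
    exact hd

/-- Arc essentiality.  If every arc of the flow network lies on some
`s`-`t` path and the flow game is convex, then every arc is essential
(`γ(E) − γ(E \ {e}) > 0`) and carries strictly positive flow in every maximum flow. -/
theorem arc_essentiality
    {V : Type*} [Fintype V] [DecidableEq V]
    (E : Finset (V × V)) (c : V × V → ℝ) (s t : V) (γ : Finset (V × V) → ℝ)
    (hst : s ≠ t) (hc : ∀ e ∈ E, 0 < c e)
    (hγ : IsFlowGame E c s t γ)
    (hcover : ∀ e ∈ E, ∃ P : Finset (V × V), IsSTPath E s t P ∧ e ∈ P)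
    (hconv : GameConvex E γ) :
    (∀ e ∈ E, 0 < γ E - γ (E.erase e)) ∧
    (∀ f : V × V → ℝ, IsFeasibleFlow E c s t E f → flowValue E s f = γ E →
      ∀ e ∈ E, 0 < f e) := by
  have main : ∀ e ∈ E, 0 < γ E - γ (E.erase e) := by
    intro e he
    obtain ⟨P, ⟨vs, ⟨hn, hh, hl, hch⟩, rfl⟩, heP⟩ := hcover e he
    obtain ⟨l, rfl⟩ : ∃ l, vs = s :: l := by
      cases vs with
      | nil => simp at hh
      | cons a l => simp at hh; exact ⟨l, by rw [hh]⟩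
    have hE := arcsOf_subset E l s hch
    obtain ⟨f, hf, hpos⟩ := path_flow E c s t hst hc l hn hl hE
    have h1 : 0 < γ (arcsOf (s :: l)) := lt_of_lt_of_le hpos ((hγ _ hE).2 ⟨f, hf, rfl⟩)
    have h2 : γ ((arcsOf (s :: l)).erase e) ≤ 0 := by
      obtain ⟨g, hg, hgv⟩ := (hγ ((arcsOf (s :: l)).erase e)
        ((Finset.erase_subset _ _).trans hE)).1
      obtain ⟨U, hs, ht, hU⟩ := arcsOf_cut e l s t hn hl heP
      rw [← hgv]
      refine cut_le E c s t _ g hg U hs ht fun a ha => ?_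
      exact hU a (Finset.mem_of_mem_erase ha) (Finset.ne_of_mem_erase ha)
    have h3 := hconv e he ((arcsOf (s :: l)).erase e) (E.erase e)
      (Finset.erase_subset_erase e hE) (Finset.Subset.refl _)
    rw [Finset.insert_erase heP, Finset.insert_erase he] at h3
    linarith
  refine ⟨main, fun f hf hv e he => ?_⟩
  refine lt_of_le_of_ne (hf.1 e he).1 fun h0 => ?_
  have h1 := main e he
  have h2 : γ E ≤ γ (E.erase e) := by
    refine (hγ _ (Finset.erase_subset _ _)).2 ⟨f, ⟨hf.1, fun a ha => ?_, hf.2.2⟩, hv⟩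
    by_cases hae : a = e
    · rw [hae, ← h0]
    · exact hf.2.1 a fun haE => ha (Finset.mem_erase.2 ⟨hae, haE⟩)
  linarith
end
end

section
/- Let D = (V, E; c; s, t) be a flow network in which every arc belongs to at least one s-t path, and let P and Q be two distinct s-t paths. Let u be the vertex where they diverge and v the vertex where they merge and never separate again, i.e., they share the initial subpath P_{su} = Q_{su} from s to u and the terminal subpath P_{vt} = Q_{vt} from v to t, the arcs of P and Q leaving u are distinct, and the arcs of P and Q entering v are distinct. If the flow game Γ_D is convex, then the subpaths P_{uv} and Q_{uv} share no internal vertex, and moreover the capacities satisfy c(P_{uv}) + c(Q_{uv}) ≤ c(a) for every arc a of the shared segments P_{su} and P_{vt} (equivalently, c(P_{uv}) + c(Q_{uv}) ≤ min{c(P_{su}), c(P_{vt})}, with the convention that c(P_{su}) = +∞ if u = s and c(P_{vt}) = +∞ if v = t). -/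
open scoped Classical
open Finset

noncomputable section

section helpers
variable {V : Type*} [DecidableEq V]

theorem arcsOf_cons_cons_s2 (x y : V) (l : List V) :
    arcsOf (x :: y :: l) = insert (x, y) (arcsOf (y :: l)) := by
  simp [arcsOf]

theorem arcsOf_mem_ends : ∀ (l : List V) (e : V × V), e ∈ arcsOf l → e.1 ∈ l ∧ e.2 ∈ l
  | [], e, h => by simp [arcsOf] at h
  | [x], e, h => by simp [arcsOf] at h
  | x :: y :: l, e, h => by
    rw [arcsOf_cons_cons_s2, Finset.mem_insert] at h
    rcases h with rfl | h
    · simp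
    · have := arcsOf_mem_ends (y :: l) e h
      exact ⟨List.mem_cons_of_mem _ this.1, List.mem_cons_of_mem _ this.2⟩

theorem arcsOf_append : ∀ (l : List V) (x : V) (m : List V),
    arcsOf (l ++ x :: m) = arcsOf (l ++ [x]) ∪ arcsOf (x :: m)
  | [], x, m => by simp [arcsOf]
  | [a], x, m => by
    simp only [List.cons_append, List.nil_append, arcsOf_cons_cons_s2]
    ext e; simp [arcsOf]
  | a :: b :: l, x, m => by
    have := arcsOf_append (b :: l) x m
    simp only [List.cons_append, arcsOf_cons_cons_s2] at this ⊢
    rw [this, Finset.insert_union]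

theorem arcsOf_split : ∀ (l : List V) (e : V × V), e ∈ arcsOf l →
    ∃ p r, l = p ++ e.1 :: e.2 :: r
  | [], e, h => by simp [arcsOf] at h
  | [x], e, h => by simp [arcsOf] at h
  | x :: y :: l, e, h => by
    rw [arcsOf_cons_cons_s2, Finset.mem_insert] at h
    rcases h with rfl | h
    · exact ⟨[], l, rfl⟩
    · obtain ⟨p, r, hh⟩ := arcsOf_split (y :: l) e h
      exact ⟨x :: p, r, by rw [hh]; rfl⟩

theorem arcsOf_subset_of_chain (E : Finset (V × V)) : ∀ (l : List V),
    l.IsChain (fun x y => (x, y) ∈ E) → arcsOf l ⊆ E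
  | [], _ => by simp [arcsOf]
  | [x], _ => by simp [arcsOf]
  | x :: y :: l, h => by
    rw [List.isChain_cons_cons] at h
    rw [arcsOf_cons_cons_s2]
    exact Finset.insert_subset h.1 (arcsOf_subset_of_chain E (y :: l) h.2)

theorem chain_of_arcsOf_subset (E : Finset (V × V)) : ∀ (l : List V),
    arcsOf l ⊆ E → l.IsChain (fun x y => (x, y) ∈ E)
  | [], _ => by simp
  | [x], _ => by simp
  | x :: y :: l, h => by
    rw [arcsOf_cons_cons_s2, Finset.insert_subset_iff] at h
    rw [List.isChain_cons_cons]
    exact ⟨h.1, chain_of_arcsOf_subset E (y :: l) h.2⟩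

theorem net_path (w : V) : ∀ (l : List V) (x y : V), (x :: l).Nodup →
    (x :: l).getLast? = some y →
    ∑ e ∈ arcsOf (x :: l), ((if e.1 = w then (1:ℝ) else 0) - (if e.2 = w then 1 else 0))
      = (if x = w then 1 else 0) - (if y = w then 1 else 0)
  | [], x, y, _, h => by
    simp at h; subst h; simp [arcsOf]
  | z :: l, x, y, hn, h => by
    rw [arcsOf_cons_cons_s2, Finset.sum_insert]
    · rw [net_path w l z y (List.nodup_cons.1 hn).2 (by simpa using h)]
      ring
    · intro hm
      exact (List.nodup_cons.1 hn).1 (arcsOf_mem_ends _ _ hm).1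

theorem path_gamma (E : Finset (V × V)) (c : V × V → ℝ) (s t : V) (γ : Finset (V × V) → ℝ)
    (hγ : IsFlowGame E c s t γ) (hst : s ≠ t) (A : List V) (hA : IsPathList E s t A)
    (k : ℝ) (hk : 0 ≤ k) (hkc : ∀ e ∈ arcsOf A, k ≤ c e) (hc : ∀ e ∈ E, 0 < c e) :
    k ≤ γ (arcsOf A) := by
  obtain ⟨hn, hh, hl, hch⟩ := hA
  have hsub := arcsOf_subset_of_chain E A hch
  obtain ⟨l, rfl⟩ : ∃ l, A = s :: l := by
    cases A with
    | nil => simp at hh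
    | cons a l => simp at hh; exact ⟨l, by rw [hh]⟩
  have key : ∀ w, ∑ e ∈ E.filter (fun e => e.1 = w), (if e ∈ arcsOf (s :: l) then k else 0)
      - ∑ e ∈ E.filter (fun e => e.2 = w), (if e ∈ arcsOf (s :: l) then k else 0)
      = k * ((if s = w then 1 else 0) - (if t = w then 1 else 0)) := by
    intro w
    rw [← net_path w l s t hn hl, Finset.sum_filter, Finset.sum_filter, ← Finset.sum_sub_distrib,
      Finset.mul_sum, ← Finset.sum_subset hsub]
    · apply Finset.sum_congr rfl
      intro e he
      simp only [he, if_true]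
      split_ifs <;> ring
    · intro e _ he
      simp [he]
  apply (hγ _ hsub).2
  refine ⟨fun e => if e ∈ arcsOf (s :: l) then k else 0, ⟨?_, ?_, ?_⟩, ?_⟩
  · intro e he
    dsimp only
    split_ifs with h
    · exact ⟨hk, hkc e h⟩
    · exact ⟨le_rfl, (hc e he).le⟩
  · intro e he; simp [he]
  · intro w hs ht
    have := key w
    rw [if_neg (Ne.symm hs), if_neg (Ne.symm ht)] at this
    linarith
  · have := key s
    rw [if_pos rfl, if_neg (Ne.symm hst)] at this
    unfold flowValue
    linarith

theorem cut_bound (E : Finset (V × V)) (c : V × V → ℝ) (s t : V) (γ : Finset (V × V) → ℝ)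
    (hγ : IsFlowGame E c s t γ) (S : Finset (V × V)) (hS : S ⊆ E) (X : Finset V)
    (hs : s ∈ X) (ht : t ∉ X) :
    γ S ≤ ∑ e ∈ S.filter (fun e => e.1 ∈ X ∧ e.2 ∉ X), c e := by
  obtain ⟨f, ⟨hf1, hf2, hf3⟩, hv⟩ := (hγ S hS).1
  rw [← hv]
  have h1 : flowValue E s f = ∑ w ∈ X, (∑ e ∈ E.filter (fun e => e.1 = w), f e
      - ∑ e ∈ E.filter (fun e => e.2 = w), f e) := by
    rw [Finset.sum_eq_single_of_mem s hs]
    · rfl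
    · intro w hw hws
      rw [hf3 w hws (by rintro rfl; exact ht hw), sub_self]
  rw [h1, Finset.sum_sub_distrib]
  simp only [Finset.sum_filter]
  rw [Finset.sum_comm, Finset.sum_comm (s := X), ← Finset.sum_sub_distrib]
  rw [← Finset.sum_subset hS]
  · apply Finset.sum_le_sum
    intro e he
    obtain ⟨h0, hle⟩ := hf1 e (hS he)
    simp only [Finset.sum_ite_eq]
    split_ifs <;> first | linarith | (exfalso; tauto)
  · intro e _ he
    simp [hf2 e he]

theorem supermod (E : Finset (V × V)) (γ : Finset (V × V) → ℝ) (h : GameConvex E γ)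
    (S T : Finset (V × V)) (hST : S ⊆ T) (D : Finset (V × V)) :
    T ∪ D ⊆ E → Disjoint T D → γ (S ∪ D) - γ S ≤ γ (T ∪ D) - γ T := by
  induction D using Finset.induction_on with
  | empty => simp
  | insert e D he ih =>
    intro hE hd
    rw [Finset.disjoint_insert_right] at hd
    rw [Finset.union_insert, Finset.insert_subset_iff] at hE
    have := ih hE.2 hd.2
    have h2 := h e hE.1 (S ∪ D) (T ∪ D) (Finset.union_subset_union_left hST) (by
      intro x hx
      refine Finset.mem_erase.2 ⟨?_, hE.2 hx⟩
      rintro rfl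
      rcases Finset.mem_union.1 hx with hx | hx
      · exact hd.1 hx
      · exact he hx)
    rw [Finset.union_insert, Finset.union_insert]
    linarith

theorem supermod' (E : Finset (V × V)) (γ : Finset (V × V) → ℝ) (h : GameConvex E γ)
    (A B : Finset (V × V)) (hA : A ⊆ E) (hB : B ⊆ E) :
    γ A + γ B ≤ γ (A ∪ B) + γ (A ∩ B) := by
  have := supermod E γ h (A ∩ B) A Finset.inter_subset_left (B \ A)
    (by rw [Finset.union_sdiff_self_eq_union]; exact Finset.union_subset hA hB)
    Finset.disjoint_sdiff
  rw [Finset.union_sdiff_self_eq_union] at this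
  have h2 : A ∩ B ∪ B \ A = B := by ext x; simp; tauto
  rw [h2] at this
  linarith

theorem diverge (t : V) : ∀ (A B : List V) (a : V), (a :: A).Nodup → (a :: B).Nodup →
    (a :: A).getLast? = some t → (a :: B).getLast? = some t → A ≠ B →
    ∃ l x y₁ m₁ y₂ m₂, a :: A = l ++ x :: y₁ :: m₁ ∧ a :: B = l ++ x :: y₂ :: m₂ ∧ y₁ ≠ y₂
  | [], [], a, _, _, _, _, h => absurd rfl h
  | [], b :: B, a, _, hb, ha', hb', _ => by
    simp only [List.getLast?_singleton, Option.some.injEq] at ha'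
    subst ha'
    rw [List.getLast?_cons_cons] at hb'
    exact absurd (List.mem_of_getLast? hb') (List.nodup_cons.1 hb).1
  | b :: B, [], a, hb, _, hb', ha', _ => by
    simp only [List.getLast?_singleton, Option.some.injEq] at ha'
    subst ha'
    rw [List.getLast?_cons_cons] at hb'
    exact absurd (List.mem_of_getLast? hb') (List.nodup_cons.1 hb).1
  | b :: A, b' :: B, a, hA, hB, hA', hB', hne => by
    by_cases hbb : b = b'
    · subst hbb
      rw [List.getLast?_cons_cons] at hA' hB'
      obtain ⟨l, x, y₁, m₁, y₂, m₂, h1, h2, h3⟩ := diverge t A B b (List.nodup_cons.1 hA).2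
        (List.nodup_cons.1 hB).2 hA' hB' (by rintro rfl; exact hne rfl)
      exact ⟨a :: l, x, y₁, m₁, y₂, m₂, by rw [h1]; rfl, by rw [h2]; rfl, h3⟩
    · exact ⟨[], a, b, A, b', B, rfl, rfl, hbb⟩

theorem leave_prefix (l r : List V) (x y : V) (hn : (l ++ x :: y :: r).Nodup) (e : V × V)
    (he : e ∈ arcsOf (l ++ x :: y :: r)) (h1 : e.1 ∈ l ++ [x]) (h2 : e.2 ∉ l ++ [x]) :
    e = (x, y) := by
  rw [arcsOf_append, Finset.mem_union, arcsOf_cons_cons_s2, Finset.mem_insert] at he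
  rcases he with he | he | he
  · exact absurd (arcsOf_mem_ends _ _ he).2 h2
  · exact he
  · have h3 := (arcsOf_mem_ends _ _ he).1
    have : l ++ x :: y :: r = (l ++ [x]) ++ (y :: r) := by simp
    rw [this] at hn
    exact absurd h3 (fun h => List.disjoint_of_nodup_append hn h1 h)

theorem leave_suffix (l r : List V) (x y : V) (hn : (l ++ x :: y :: r).Nodup) (e : V × V)
    (he : e ∈ arcsOf (l ++ x :: y :: r)) (h1 : e.1 ∉ y :: r) (h2 : e.2 ∈ y :: r) :
    e = (x, y) := by
  rw [arcsOf_append, Finset.mem_union, arcsOf_cons_cons_s2, Finset.mem_insert] at he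
  rcases he with he | he | he
  · have h3 := (arcsOf_mem_ends _ _ he).2
    have : l ++ x :: y :: r = (l ++ [x]) ++ (y :: r) := by simp
    rw [this] at hn
    exact absurd h2 (fun h => List.disjoint_of_nodup_append hn h3 h)
  · exact he
  · exact absurd (arcsOf_mem_ends _ _ he).1 h1

theorem s_mem_prefix (l r : List V) (x s : V) (h : (l ++ x :: r).head? = some s) :
    s ∈ l ++ [x] := by
  cases l <;> simp_all

theorem t_mem_suffix (l r : List V) (y t : V) (h : (l ++ y :: r).getLast? = some t) :
    t ∈ y :: r := by
  rw [List.getLast?_append_of_ne_nil _ (by simp)] at h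
  exact List.mem_of_getLast? h

theorem inter_zero (E : Finset (V × V)) (c : V × V → ℝ) (s t : V) (γ : Finset (V × V) → ℝ)
    (hγ : IsFlowGame E c s t γ) (A B : List V) (hA : IsPathList E s t A)
    (hB : IsPathList E s t B) (hne : A ≠ B) : γ (arcsOf A ∩ arcsOf B) ≤ 0 := by
  obtain ⟨hAn, hAh, hAl, hAc⟩ := hA
  obtain ⟨hBn, hBh, hBl, hBc⟩ := hB
  obtain ⟨A', rfl⟩ : ∃ l, A = s :: l := by
    cases A with
    | nil => simp at hAh
    | cons a l => simp at hAh; exact ⟨l, by rw [hAh]⟩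
  obtain ⟨B', rfl⟩ : ∃ l, B = s :: l := by
    cases B with
    | nil => simp at hBh
    | cons a l => simp at hBh; exact ⟨l, by rw [hBh]⟩
  obtain ⟨l, x, y₁, m₁, y₂, m₂, h1, h2, h3⟩ := diverge t A' B' s hAn hBn hAl hBl
    (by rintro rfl; exact hne rfl)
  have hsub := arcsOf_subset_of_chain E _ hAc
  rw [h1] at hsub hAn hAh hAl ⊢
  rw [h2] at hBn ⊢
  have hs := s_mem_prefix _ _ _ _ hAh
  have e1 : l ++ x :: y₁ :: m₁ = (l ++ [x]) ++ y₁ :: m₁ := by simp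
  have ht : t ∉ l ++ [x] := by
    rw [e1] at hAl hAn
    exact fun h => List.disjoint_of_nodup_append hAn h (t_mem_suffix _ _ _ _ hAl)
  refine (cut_bound E c s t γ hγ _ (Finset.inter_subset_left.trans hsub) (l ++ [x]).toFinset
    (List.mem_toFinset.2 hs) (by rwa [List.mem_toFinset])).trans ?_
  rw [Finset.filter_false_of_mem, Finset.sum_empty]
  rintro e he ⟨ha, hb⟩
  rw [List.mem_toFinset] at ha hb
  rw [Finset.mem_inter] at he
  have q1 := leave_prefix _ _ _ _ hAn e he.1 ha hb
  have q2 := leave_prefix _ _ _ _ hBn e he.2 ha hb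
  rw [q1] at q2
  exact h3 (Prod.ext_iff.1 q2).2

theorem union_prefix (E : Finset (V × V)) (c : V × V → ℝ) (s t : V) (γ : Finset (V × V) → ℝ)
    (hγ : IsFlowGame E c s t γ) (hc : ∀ e ∈ E, 0 < c e) (l r r' : List V) (x y : V)
    (hA : IsPathList E s t (l ++ x :: y :: r)) (hB : IsPathList E s t (l ++ x :: y :: r')) :
    γ (arcsOf (l ++ x :: y :: r) ∪ arcsOf (l ++ x :: y :: r')) ≤ c (x, y) := by
  obtain ⟨hAn, hAh, hAl, hAc⟩ := hA
  obtain ⟨hBn, hBh, hBl, hBc⟩ := hB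
  have hsA := arcsOf_subset_of_chain E _ hAc
  have hsB := arcsOf_subset_of_chain E _ hBc
  have hs := s_mem_prefix _ _ _ _ hAh
  have hxy : (x, y) ∈ E := hsA (by rw [arcsOf_append, arcsOf_cons_cons_s2]; simp)
  have e1 : l ++ x :: y :: r = (l ++ [x]) ++ y :: r := by simp
  have ht : t ∉ l ++ [x] := by
    rw [e1] at hAl hAn
    exact fun h => List.disjoint_of_nodup_append hAn h (t_mem_suffix _ _ _ _ hAl)
  refine (cut_bound E c s t γ hγ _ (Finset.union_subset hsA hsB) (l ++ [x]).toFinset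
    (List.mem_toFinset.2 hs) (by rwa [List.mem_toFinset])).trans ?_
  refine (Finset.sum_le_sum_of_subset_of_nonneg (t := {(x, y)}) ?_ ?_).trans (by simp)
  · intro e he
    rw [Finset.mem_filter, Finset.mem_union, List.mem_toFinset, List.mem_toFinset] at he
    rw [Finset.mem_singleton]
    rcases he with ⟨h | h, ha, hb⟩
    · exact leave_prefix _ _ _ _ hAn e h ha hb
    · exact leave_prefix _ _ _ _ hBn e h ha hb
  · intro e he _
    rw [Finset.mem_singleton] at he
    rw [he]; exact (hc _ hxy).le

theorem union_suffix [Fintype V] (E : Finset (V × V)) (c : V × V → ℝ) (s t : V)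
    (γ : Finset (V × V) → ℝ)
    (hγ : IsFlowGame E c s t γ) (hc : ∀ e ∈ E, 0 < c e) (l l' r : List V) (x y : V)
    (hA : IsPathList E s t (l ++ x :: y :: r)) (hB : IsPathList E s t (l' ++ x :: y :: r)) :
    γ (arcsOf (l ++ x :: y :: r) ∪ arcsOf (l' ++ x :: y :: r)) ≤ c (x, y) := by
  obtain ⟨hAn, hAh, hAl, hAc⟩ := hA
  obtain ⟨hBn, hBh, hBl, hBc⟩ := hB
  have hsA := arcsOf_subset_of_chain E _ hAc
  have hsB := arcsOf_subset_of_chain E _ hBc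
  have hs := s_mem_prefix _ _ _ _ hAh
  have hxy : (x, y) ∈ E := hsA (by rw [arcsOf_append, arcsOf_cons_cons_s2]; simp)
  have e1 : l ++ x :: y :: r = (l ++ [x]) ++ y :: r := by simp
  have ht : t ∈ y :: r := by
    rw [e1] at hAl
    exact t_mem_suffix _ _ _ _ hAl
  have hs' : s ∉ y :: r := by
    rw [e1] at hAn
    exact fun h => List.disjoint_of_nodup_append hAn hs h
  refine (cut_bound E c s t γ hγ _ (Finset.union_subset hsA hsB) ((y :: r).toFinset)ᶜ
    (by rwa [Finset.mem_compl, List.mem_toFinset])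
    (by rwa [Finset.mem_compl, List.mem_toFinset, not_not])).trans ?_
  refine (Finset.sum_le_sum_of_subset_of_nonneg (t := {(x, y)}) ?_ ?_).trans (by simp)
  · intro e he
    rw [Finset.mem_filter, Finset.mem_union, Finset.mem_compl, Finset.mem_compl, not_not,
      List.mem_toFinset, List.mem_toFinset] at he
    rw [Finset.mem_singleton]
    rcases he with ⟨h | h, ha, hb⟩
    · exact leave_suffix _ _ _ _ hAn e h ha hb
    · exact leave_suffix _ _ _ _ hBn e h ha hb
  · intro e he _
    rw [Finset.mem_singleton] at he
    rw [he]; exact (hc _ hxy).le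

theorem min_arc (E : Finset (V × V)) (c : V × V → ℝ) (s t : V) (hst : s ≠ t) (A : List V)
    (hA : IsPathList E s t A) : ∃ a ∈ arcsOf A, ∀ b ∈ arcsOf A, c a ≤ c b := by
  apply Finset.exists_min_image
  obtain ⟨_, h1, h2, _⟩ := hA
  match A with
  | [] => simp at h1
  | [x] => simp at h1 h2; exact absurd (h1.symm.trans h2) hst
  | x :: y :: l => rw [arcsOf_cons_cons_s2]; exact Finset.insert_nonempty _ _

/-- Two distinct paths: the sum of the minimal capacities is at most the capacity of any
arc in a common prefix or common suffix. -/
theorem pair_bound [Fintype V] (E : Finset (V × V)) (c : V × V → ℝ) (s t : V)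
    (γ : Finset (V × V) → ℝ)
    (hst : s ≠ t) (hc : ∀ e ∈ E, 0 < c e) (hγ : IsFlowGame E c s t γ)
    (hconv : GameConvex E γ) (A B : List V) (hA : IsPathList E s t A)
    (hB : IsPathList E s t B) (hne : A ≠ B) (e : V × V)
    (he : (∃ l r r', A = l ++ r ∧ B = l ++ r' ∧ e ∈ arcsOf l) ∨
      (∃ l l' r, A = l ++ r ∧ B = l' ++ r ∧ e ∈ arcsOf r))
    (a b : V × V) (ha : a ∈ arcsOf A) (ha' : ∀ e ∈ arcsOf A, c a ≤ c e)
    (hb : b ∈ arcsOf B) (hb' : ∀ e ∈ arcsOf B, c b ≤ c e) : c a + c b ≤ c e := by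
  have hsA := arcsOf_subset_of_chain E _ hA.2.2.2
  have hsB := arcsOf_subset_of_chain E _ hB.2.2.2
  have h1 := path_gamma E c s t γ hγ hst A hA (c a) (hc _ (hsA ha)).le ha' hc
  have h2 := path_gamma E c s t γ hγ hst B hB (c b) (hc _ (hsB hb)).le hb' hc
  have h3 := supermod' E γ hconv _ _ hsA hsB
  have h4 := inter_zero E c s t γ hγ A B hA hB hne
  have h5 : γ (arcsOf A ∪ arcsOf B) ≤ c e := by
    rcases he with ⟨l, r, r', rfl, rfl, he⟩ | ⟨l, l', r, rfl, rfl, he⟩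
    · obtain ⟨p, q, rfl⟩ := arcsOf_split _ _ he
      simp only [List.append_assoc, List.cons_append] at hA hB ⊢
      exact union_prefix E c s t γ hγ hc _ _ _ _ _ hA hB
    · obtain ⟨p, q, rfl⟩ := arcsOf_split _ _ he
      simp only [← List.append_assoc] at hA hB ⊢
      exact union_suffix E c s t γ hγ hc _ _ _ _ _ hA hB
  linarith

theorem first_common (m₁ : List V) : ∀ (m₂ : List V), (∃ w ∈ m₂, w ∈ m₁) →
    ∃ q w q', m₂ = q ++ w :: q' ∧ w ∈ m₁ ∧ ∀ z ∈ q, z ∉ m₁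
  | [], h => by simp at h
  | a :: m, h => by
    by_cases ha : a ∈ m₁
    · exact ⟨[], a, m, rfl, ha, by simp⟩
    · obtain ⟨q, w, q', h1, h2, h3⟩ := first_common m₁ m (by
        obtain ⟨w, hw, hw'⟩ := h
        rcases List.mem_cons.1 hw with rfl | hw
        · exact absurd hw' ha
        · exact ⟨w, hw, hw'⟩)
      refine ⟨a :: q, w, q', by rw [h1]; rfl, h2, ?_⟩
      intro z hz
      rcases List.mem_cons.1 hz with rfl | hz
      · exact ha
      · exact h3 z hz

theorem pathCap_le (c : V × V → ℝ) (P : Finset (V × V)) (a : V × V) (ha : a ∈ P) :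
    pathCap c P ≤ c a :=
  csInf_le (P.finite_toSet.image c).bddBelow ⟨a, ha, rfl⟩

end helpers

/-- Disjoint parallel segments.  Let `P` and `Q` be distinct `s`-`t`
paths sharing the initial subpath up to `u` and the terminal subpath from `v`, diverging
at `u` (distinct arcs leaving `u`) and merging at `v` (distinct arcs entering `v`).
If the flow game is convex, then the middle segments `P_{uv}` and `Q_{uv}` share no
internal vertex and `c(P_{uv}) + c(Q_{uv}) ≤ c(a)` for every arc `a` of the shared
initial and terminal segments. -/
theorem disjoint_parallel_segments
    {V : Type*} [Fintype V] [DecidableEq V]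
    (E : Finset (V × V)) (c : V × V → ℝ) (s t : V) (γ : Finset (V × V) → ℝ)
    (hst : s ≠ t) (hc : ∀ e ∈ E, 0 < c e)
    (hγ : IsFlowGame E c s t γ)
    (hcover : ∀ e ∈ E, ∃ P : Finset (V × V), IsSTPath E s t P ∧ e ∈ P)
    (hconv : GameConvex E γ)
    (u v : V) (pre m₁ m₂ post : List V)
    (hP : IsPathList E s t (pre ++ u :: m₁ ++ v :: post))
    (hQ : IsPathList E s t (pre ++ u :: m₂ ++ v :: post))
    (hdiv : (m₁ ++ [v]).head? ≠ (m₂ ++ [v]).head?)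
    (hmerge : (u :: m₁).getLast? ≠ (u :: m₂).getLast?) :
    (∀ w ∈ m₁, w ∉ m₂) ∧
    (∀ a ∈ arcsOf (pre ++ [u]) ∪ arcsOf (v :: post),
      pathCap c (arcsOf (u :: m₁ ++ [v])) + pathCap c (arcsOf (u :: m₂ ++ [v])) ≤ c a) := by
  have hPE := arcsOf_subset_of_chain E _ hP.2.2.2
  have hQE := arcsOf_subset_of_chain E _ hQ.2.2.2
  have hPQ : pre ++ u :: m₁ ++ v :: post ≠ pre ++ u :: m₂ ++ v :: post := by
    intro h
    have : m₁ = m₂ := by simpa using h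
    subst this
    exact hdiv rfl
  constructor
  · intro w₀ hw1 hw2
    obtain ⟨q, w, q', rfl, hwm, hq⟩ := first_common m₁ m₂ ⟨w₀, hw2, hw1⟩
    obtain ⟨p, p', rfl⟩ := List.append_of_mem hwm
    have hR : IsPathList E s t ((pre ++ u :: q) ++ w :: (p' ++ v :: post)) := by
      refine ⟨?_, ?_, ?_, ?_⟩
      · have n1 := hP.1
        have n2 := hQ.1
        have hq2 : List.Disjoint q (p ++ w :: p') := fun z h1 h2 => hq z h1 h2
        simp only [List.nodup_append', List.nodup_cons, List.mem_append, List.mem_cons,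
          List.disjoint_append_left, List.disjoint_append_right, List.disjoint_cons_left,
          List.disjoint_cons_right, not_or] at n1 n2 hq2 ⊢
        tauto
      · have := hP.2.1
        cases pre <;> simpa using this
      · have := hP.2.2.1
        rw [List.getLast?_append_of_ne_nil _ (by simp)] at this
        have e : (pre ++ u :: q) ++ w :: (p' ++ v :: post)
          = ((pre ++ u :: q) ++ w :: p') ++ v :: post := by simp
        rw [e, List.getLast?_append_of_ne_nil _ (by simp)]
        exact this
      · apply chain_of_arcsOf_subset
        rw [arcsOf_append]
        apply Finset.union_subset
        · refine Finset.Subset.trans ?_ hQE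
          have : pre ++ u :: (q ++ w :: q') ++ v :: post
            = (pre ++ u :: q) ++ w :: (q' ++ v :: post) := by simp
          rw [this, arcsOf_append (pre ++ u :: q) w (q' ++ v :: post)]
          exact Finset.subset_union_left
        · refine Finset.Subset.trans ?_ hPE
          have : pre ++ u :: (p ++ w :: p') ++ v :: post
            = (pre ++ u :: p) ++ w :: (p' ++ v :: post) := by simp
          rw [this, arcsOf_append (pre ++ u :: p) w (p' ++ v :: post)]
          exact Finset.subset_union_right
    obtain ⟨a, ha, ha'⟩ := min_arc E c s t hst _ hP
    obtain ⟨b, hb, hb'⟩ := min_arc E c s t hst _ hQ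
    obtain ⟨d, hd, hd'⟩ := min_arc E c s t hst _ hR
    have hRQ : (pre ++ u :: q) ++ w :: (p' ++ v :: post) ≠
        pre ++ u :: (q ++ w :: q') ++ v :: post := by
      intro h
      have : p' = q' := by simpa using h
      subst this
      apply hmerge
      have e1 : u :: (p ++ w :: p') = (u :: p) ++ w :: p' := rfl
      have e2 : u :: (q ++ w :: p') = (u :: q) ++ w :: p' := rfl
      rw [e1, e2, List.getLast?_append_of_ne_nil _ (by simp),
        List.getLast?_append_of_ne_nil _ (by simp)]
    have hRP : (pre ++ u :: q) ++ w :: (p' ++ v :: post) ≠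
        pre ++ u :: (p ++ w :: p') ++ v :: post := by
      intro h
      have : q = p := by simpa using h
      subst this
      apply hdiv
      cases q <;> simp
    have hd2 := hd
    rw [arcsOf_append, Finset.mem_union] at hd2
    rcases hd2 with hd2 | hd2
    · have := pair_bound E c s t γ hst hc hγ hconv _ _ hR hQ hRQ d
        (Or.inl ⟨(pre ++ u :: q) ++ [w], p' ++ v :: post, q' ++ v :: post,
          by simp, by simp, hd2⟩) d b hd hd' hb hb'
      have := hc b (hQE hb)
      linarith
    · have := pair_bound E c s t γ hst hc hγ hconv _ _ hR hP hRP d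
        (Or.inr ⟨pre ++ u :: q, pre ++ u :: p, w :: (p' ++ v :: post),
          by simp, by simp, hd2⟩) d a hd hd' ha ha'
      have := hc a (hPE ha)
      linarith
  · obtain ⟨a, ha, ha'⟩ := min_arc E c s t hst _ hP
    obtain ⟨b, hb, hb'⟩ := min_arc E c s t hst _ hQ
    have key : ∀ e ∈ arcsOf (pre ++ [u]) ∪ arcsOf (v :: post), c a + c b ≤ c e := by
      intro e he
      apply pair_bound E c s t γ hst hc hγ hconv _ _ hP hQ hPQ e _ a b ha ha' hb hb'
      rcases Finset.mem_union.1 he with he | he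
      · exact Or.inl ⟨pre ++ [u], m₁ ++ v :: post, m₂ ++ v :: post, by simp, by simp, he⟩
      · exact Or.inr ⟨pre ++ u :: m₁, pre ++ u :: m₂, v :: post, by simp, by simp, he⟩
    have hapos := hc a (hPE ha)
    have hbpos := hc b (hQE hb)
    have split : ∀ m : List V, arcsOf (pre ++ u :: m ++ v :: post) =
        arcsOf (pre ++ [u]) ∪ arcsOf (u :: m ++ [v]) ∪ arcsOf (v :: post) := by
      intro m
      rw [arcsOf_append (pre ++ u :: m) v post]
      have : pre ++ u :: m ++ [v] = pre ++ u :: (m ++ [v]) := by simp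
      rw [this, arcsOf_append pre u (m ++ [v])]
      rfl
    have hA : a ∈ arcsOf (u :: m₁ ++ [v]) := by
      rw [split, Finset.mem_union, Finset.mem_union] at ha
      by_contra hcon
      have := key a (by rw [Finset.mem_union]; tauto)
      linarith
    have hB : b ∈ arcsOf (u :: m₂ ++ [v]) := by
      rw [split, Finset.mem_union, Finset.mem_union] at hb
      by_contra hcon
      have := key b (by rw [Finset.mem_union]; tauto)
      linarith
    intro e he
    have := key e he
    have := pathCap_le c _ a hA
    have := pathCap_le c _ b hB
    linarith
end
end

section
/- Let D = (V, E; c; s, t) be a flow network in which every arc belongs to at least one s-t path. If the flow game Γ_D is convex, then every bottleneck arc b ∈ B belongs to exactly one s-t path, i.e., |𝒫_b| = 1 for every b ∈ B. -/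
open scoped Classical
open Finset

noncomputable section

theorem bx_mem_arcs {V : Type*} [DecidableEq V] (l : List V) (x y : V) :
    (x, y) ∈ arcsOf l ↔ ∃ l1 l2, l = l1 ++ x :: y :: l2 := by
  induction l with
  | nil => simp [arcsOf]
  | cons a l ih =>
    cases l with
    | nil =>
      simp only [arcsOf, List.tail_cons, List.zip_nil_right, List.toFinset_nil, Finset.notMem_empty,
        false_iff]
      rintro ⟨l1, l2, h⟩
      have := congrArg List.length h
      simp at this
      omega
    | cons b l =>
      have hh : (x, y) ∈ arcsOf (a :: b :: l) ↔ (x = a ∧ y = b) ∨ (x, y) ∈ arcsOf (b :: l) := by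
        simp [arcsOf]
      rw [hh, ih]
      constructor
      · rintro (⟨rfl, rfl⟩ | ⟨l1, l2, h⟩)
        · exact ⟨[], l, rfl⟩
        · exact ⟨a :: l1, l2, by rw [h]; rfl⟩
      · rintro ⟨l1, l2, h⟩
        cases l1 with
        | nil => left; simp at h; exact ⟨h.1.symm, h.2.1.symm⟩
        | cons d l1 => right; simp at h; exact ⟨l1, l2, h.2⟩

theorem bx_arcs_sub {V : Type*} [DecidableEq V] {E : Finset (V × V)} {l : List V}
    (h : l.IsChain (fun x y => (x, y) ∈ E)) : arcsOf l ⊆ E := by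
  rintro ⟨x, y⟩ hxy
  obtain ⟨l1, l2, rfl⟩ := (bx_mem_arcs _ _ _).1 hxy
  have := (List.isChain_append.1 h).2.1
  simp at this
  exact this.1

theorem bx_chain_of_sub {V : Type*} [DecidableEq V] {E : Finset (V × V)} {l : List V}
    (h : ∀ x y, ∀ l1 l2, l = l1 ++ x :: y :: l2 → (x, y) ∈ E) :
    l.IsChain (fun x y => (x, y) ∈ E) := by
  induction l with
  | nil => simp
  | cons a l ih =>
    cases l with
    | nil => simp
    | cons b l =>
      rw [List.isChain_cons_cons]
      refine ⟨h a b [] l rfl, ih ?_⟩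
      intro x y l1 l2 e
      exact h x y (a :: l1) l2 (by rw [e]; rfl)

/-- crossing lemma -/
theorem bx_cross {V : Type*} [DecidableEq V] {l1 l2 : List V} {u v : V}
    (hn : (l1 ++ u :: v :: l2).Nodup) {x y : V} (h : (x, y) ∈ arcsOf (l1 ++ u :: v :: l2))
    (hx : x ∉ v :: l2) (hy : y ∈ v :: l2) : (x, y) = (u, v) := by
  induction l1 with
  | nil =>
    obtain ⟨k1, k2, e⟩ := (bx_mem_arcs _ _ _).1 h
    cases k1 with
    | nil => simp at e; rw [e.1, e.2.1]
    | cons d k1 =>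
      simp at e
      exact absurd (by rw [e.2]; simp) hx
  | cons a l1 ih =>
    obtain ⟨k1, k2, e⟩ := (bx_mem_arcs _ _ _).1 h
    cases k1 with
    | nil =>
      exfalso
      cases l1 with
      | nil => simp at e; simp at hn hy; grind
      | cons d l1 =>
        simp at e
        simp at hn hy
        grind
    | cons d k1 =>
      simp only [List.cons_append, List.cons.injEq] at e
      refine ih (by simp at hn ⊢; tauto) ?_
      rw [bx_mem_arcs]; exact ⟨k1, k2, e.2⟩

theorem bx_cross' {V : Type*} [DecidableEq V] {l1 l2 : List V} {u v : V}
    (hn : (l1 ++ u :: v :: l2).Nodup) {x y : V} (h : (x, y) ∈ arcsOf (l1 ++ u :: v :: l2))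
    (hx : x ∈ l1 ++ [u]) (hy : y ∉ l1 ++ [u]) : (x, y) = (u, v) := by
  have hym : y ∈ l1 ++ u :: v :: l2 := by
    obtain ⟨k1, k2, e⟩ := (bx_mem_arcs _ _ _).1 h
    rw [e]; simp
  have hn' : ((l1 ++ [u]) ++ (v :: l2)).Nodup := by simpa using hn
  refine bx_cross hn h ?_ ?_
  · intro hx2
    exact (List.nodup_append.1 hn').2.2 x hx x hx2 rfl
  · have : y ∈ (l1 ++ [u]) ++ (v :: l2) := by simpa using hym
    exact (List.mem_append.1 this).resolve_left hy

theorem bx_tele {V : Type*} [DecidableEq V] (l : List V) (a b v : V) (hn : l.Nodup)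
    (ha : l.head? = some a) (hb : l.getLast? = some b) :
    ∑ e ∈ arcsOf l, (((if e.1 = v then 1 else 0) - (if e.2 = v then 1 else 0) : ℝ)) =
      (if a = v then 1 else 0) - (if b = v then 1 else 0) := by
  induction l generalizing a with
  | nil => simp at ha
  | cons x l ih =>
    cases l with
    | nil =>
      simp at ha hb
      subst ha; subst hb
      simp [arcsOf]
    | cons y l =>
      simp at ha
      subst ha
      have h1 : arcsOf (x :: y :: l) = insert (x, y) (arcsOf (y :: l)) := by
        simp [arcsOf]
      have h2 : (x, y) ∉ arcsOf (y :: l) := by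
        intro h
        obtain ⟨k1, k2, e⟩ := (bx_mem_arcs _ _ _).1 h
        rw [e] at hn
        simp at hn
      rw [h1, Finset.sum_insert h2, ih y (List.nodup_cons.1 hn).2 rfl (by simpa using hb)]
      simp

theorem bx_cut {V : Type*} [Fintype V] [DecidableEq V] {E : Finset (V × V)} {c : V × V → ℝ}
    {s t : V} {S : Finset (V × V)} {f : V × V → ℝ} (hf : IsFeasibleFlow E c s t S f)
    (X : V → Prop) (hs : X s) (ht : ¬ X t) :
    flowValue E s f ≤ ∑ e ∈ E, if X e.1 ∧ ¬ X e.2 then f e else 0 := by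
  have h1 : flowValue E s f = ∑ v ∈ Finset.univ.filter X,
      (∑ e ∈ E.filter (fun e => e.1 = v), f e - ∑ e ∈ E.filter (fun e => e.2 = v), f e) := by
    rw [Finset.sum_eq_single s]
    · rfl
    · intro v hv hvs
      have hvt : v ≠ t := by rintro rfl; exact ht (by simpa using hv)
      rw [hf.2.2 v hvs hvt, sub_self]
    · intro h; simp [hs] at h
  rw [h1]
  simp_rw [Finset.sum_filter, ← Finset.sum_sub_distrib]
  simp_rw [← Finset.sum_filter]
  rw [Finset.sum_comm, Finset.sum_filter (fun a : V × V => X a.1 ∧ ¬ X a.2)]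
  apply Finset.sum_le_sum
  intro e he
  rw [Finset.sum_sub_distrib, Finset.sum_ite_eq, Finset.sum_ite_eq]
  have := (hf.1 e he).1
  simp only [Finset.mem_filter, Finset.mem_univ, true_and]
  by_cases h1 : X e.1 <;> by_cases h2 : X e.2 <;> simp [h1, h2, this]

theorem bx_cut_one {V : Type*} [Fintype V] [DecidableEq V] {E : Finset (V × V)} {c : V × V → ℝ}
    {s t : V} {γ : Finset (V × V) → ℝ} (hγ : IsFlowGame E c s t γ)
    {S : Finset (V × V)} (hS : S ⊆ E) (X : V → Prop) (hs : X s) (ht : ¬ X t) (e0 : V × V)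
    (he0 : e0 ∈ E) (h : ∀ e ∈ S, X e.1 → ¬ X e.2 → e = e0) : γ S ≤ c e0 := by
  obtain ⟨f, hf, hv⟩ := (hγ S hS).1
  rw [← hv]
  refine (bx_cut hf X hs ht).trans ?_
  have : ∑ e ∈ E, (if X e.1 ∧ ¬ X e.2 then f e else 0) ≤ ∑ e ∈ E, if e = e0 then f e else 0 := by
    apply Finset.sum_le_sum
    intro e he
    have h0 := (hf.1 e he).1
    by_cases heS : e ∈ S
    · have := h e heS
      split_ifs <;> first | tauto | linarith
    · have := hf.2.1 e heS
      simp [this]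
  refine this.trans ?_
  rw [Finset.sum_ite_eq']
  simp [he0, (hf.1 e0 he0).2]

theorem bx_cut_zero {V : Type*} [Fintype V] [DecidableEq V] {E : Finset (V × V)} {c : V × V → ℝ}
    {s t : V} {γ : Finset (V × V) → ℝ} (hγ : IsFlowGame E c s t γ)
    {S : Finset (V × V)} (hS : S ⊆ E) (X : V → Prop) (hs : X s) (ht : ¬ X t)
    (h : ∀ e ∈ S, X e.1 → X e.2) : γ S ≤ 0 := by
  obtain ⟨f, hf, hv⟩ := (hγ S hS).1
  rw [← hv]
  refine (bx_cut hf X hs ht).trans ?_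
  apply Finset.sum_nonpos
  intro e he
  by_cases heS : e ∈ S
  · have := h e heS
    split_ifs <;> first | tauto | linarith
  · have := hf.2.1 e heS
    simp [this]

theorem bx_path_ge {V : Type*} [Fintype V] [DecidableEq V] {E : Finset (V × V)} {c : V × V → ℝ}
    {s t : V} {γ : Finset (V × V) → ℝ} (hst : s ≠ t) (hc : ∀ e ∈ E, 0 < c e)
    (hγ : IsFlowGame E c s t γ)
    {l : List V} (hl : IsPathList E s t l) (m : ℝ) (hm : 0 ≤ m) (h : ∀ e ∈ arcsOf l, m ≤ c e) :
    m ≤ γ (arcsOf l) := by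
  have hsub : arcsOf l ⊆ E := bx_arcs_sub hl.2.2.2
  apply (hγ _ hsub).2
  have key : ∀ v, ∑ e ∈ E.filter (fun e => e.1 = v), (if e ∈ arcsOf l then m else 0) -
      ∑ e ∈ E.filter (fun e => e.2 = v), (if e ∈ arcsOf l then m else 0) =
      m * ((if s = v then 1 else 0) - (if t = v then 1 else 0)) := by
    intro v
    rw [← bx_tele l s t v hl.1 hl.2.1 hl.2.2.1, Finset.mul_sum, Finset.sum_filter,
      Finset.sum_filter, ← Finset.sum_sub_distrib, ← Finset.sum_subset hsub]
    · apply Finset.sum_congr rfl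
      intro e he
      simp only [he, if_true]
      split_ifs <;> simp
    · intro e _ he
      simp [he]
  refine ⟨fun e => if e ∈ arcsOf l then m else 0, ⟨?_, ?_, ?_⟩, ?_⟩
  · intro e he
    have := hc e he
    by_cases h1 : e ∈ arcsOf l
    · simp [h1, hm, h e h1]
    · simp [h1, this.le]
  · intro e he; simp [he]
  · intro v hvs hvt
    have := key v
    rw [if_neg hvs.symm, if_neg hvt.symm] at this
    linarith
  · have := key s
    rw [if_pos rfl, if_neg hst.symm] at this
    unfold flowValue
    rw [this]; ring

theorem bx_super {V : Type*} [DecidableEq V] {E : Finset (V × V)}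
    {γ : Finset (V × V) → ℝ} (hconv : GameConvex E γ) {A B : Finset (V × V)}
    (hA : A ⊆ E) (hB : B ⊆ E) : γ A + γ B ≤ γ (A ∪ B) + γ (A ∩ B) := by
  have key : ∀ R : Finset (V × V), R ⊆ E → Disjoint R B →
      γ ((A ∩ B) ∪ R) - γ (A ∩ B) ≤ γ (B ∪ R) - γ B := by
    intro R
    induction R using Finset.induction_on with
    | empty => simp
    | insert e R he ih =>
      intro hR hd
      have h1 := ih (fun x hx => hR (by simp [hx])) (by
        rw [Finset.disjoint_insert_left] at hd; exact hd.2)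
      have heB : e ∉ B := by rw [Finset.disjoint_insert_left] at hd; exact hd.1
      have h2 := hconv e (hR (by simp)) ((A ∩ B) ∪ R) (B ∪ R)
        (Finset.union_subset_union_left Finset.inter_subset_right) (by
          intro x hx
          rw [Finset.mem_erase]
          rcases Finset.mem_union.1 hx with hx | hx
          · exact ⟨fun h => heB (h ▸ hx), hB hx⟩
          · exact ⟨fun h => he (h ▸ hx), hR (by simp [hx])⟩)
      rw [Finset.union_insert, Finset.union_insert]
      linarith
  have := key (A \ B) (Finset.sdiff_subset.trans hA) Finset.sdiff_disjoint
  have e1 : (A ∩ B) ∪ (A \ B) = A := by ext x; simp; tauto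
  have e2 : B ∪ (A \ B) = A ∪ B := by ext x; simp; tauto
  rw [e1, e2] at this
  linarith

/-- distinct lists with same head and last split. -/
theorem bx_split {V : Type*} [DecidableEq V] (P Q : List V) (a b : V) (hP : P.Nodup) (hQ : Q.Nodup)
    (hPa : P.head? = some a) (hQa : Q.head? = some a) (hPb : P.getLast? = some b)
    (hQb : Q.getLast? = some b) (hne : P ≠ Q) :
    ∃ l x y z p q, P = l ++ x :: y :: p ∧ Q = l ++ x :: z :: q ∧ y ≠ z := by
  induction P generalizing Q a with
  | nil => simp at hPa
  | cons a' P ih =>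
    simp at hPa
    subst hPa
    cases Q with
    | nil => simp at hQa
    | cons a'' Q =>
      simp at hQa
      subst hQa
      cases P with
      | nil =>
        exfalso
        simp at hPb
        subst hPb
        cases Q with
        | nil => exact hne rfl
        | cons z Q =>
          have : a'' ∈ z :: Q := List.mem_of_getLast? (by simpa using hQb)
          exact (List.nodup_cons.1 hQ).1 this
      | cons y P =>
        cases Q with
        | nil =>
          exfalso
          simp at hQb
          subst hQb
          have : a'' ∈ y :: P := List.mem_of_getLast? (by simpa using hPb)
          exact (List.nodup_cons.1 hP).1 this
        | cons z Q =>
          by_cases hyz : y = z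
          · subst hyz
            obtain ⟨l, x, y', z', p, q, h1, h2, h3⟩ := ih (y :: Q) y (List.nodup_cons.1 hP).2
              (List.nodup_cons.1 hQ).2 rfl rfl (by simpa using hPb) (by simpa using hQb)
              (fun h => hne (by rw [h]))
            exact ⟨a'' :: l, x, y', z', p, q, by rw [h1]; rfl, by rw [h2]; rfl, h3⟩
          · exact ⟨[], a'', y, z, P, Q, rfl, rfl, hyz⟩

theorem bx_s_mem {V : Type*} {l1 l2 : List V} {u s : V}
    (hs : (l1 ++ u :: l2).head? = some s) : s ∈ l1 ++ [u] := by
  cases l1 with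
  | nil => simp at hs; simp [hs]
  | cons a l => simp at hs; simp [hs]

theorem bx_t_mem {V : Type*} {l1 l2 : List V} {v t : V}
    (ht : (l1 ++ v :: l2).getLast? = some t) : t ∈ v :: l2 := by
  apply List.mem_of_getLast?
  rw [List.getLast?_append_cons] at ht
  exact ht

theorem bx_disj {V : Type*} {l1 l2 : List V} {u v : V} (hn : (l1 ++ u :: v :: l2).Nodup) {x : V}
    (hx : x ∈ l1 ++ [u]) (hy : x ∈ v :: l2) : False := by
  have hn' : ((l1 ++ [u]) ++ (v :: l2)).Nodup := by simpa using hn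
  exact (List.nodup_append.1 hn').2.2 x hx x hy rfl

theorem bx_t_not {V : Type*} {l1 l2 : List V} {u v t : V} (hn : (l1 ++ u :: v :: l2).Nodup)
    (ht : (l1 ++ u :: v :: l2).getLast? = some t) : t ∉ l1 ++ [u] := fun h =>
  bx_disj hn h (bx_t_mem (l1 := l1 ++ [u]) (by simpa using ht))

theorem bx_key {V : Type*} [Fintype V] [DecidableEq V] {E : Finset (V × V)} {c : V × V → ℝ}
    {s t : V} {γ : Finset (V × V) → ℝ} (hst : s ≠ t) (hc : ∀ e ∈ E, 0 < c e)
    (hγ : IsFlowGame E c s t γ) (hconv : GameConvex E γ)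
    {P Q : List V} (hP : IsPathList E s t P) (hQ : IsPathList E s t Q) (hne : P ≠ Q)
    (e0 : V × V) (he0 : e0 ∈ arcsOf P) (hmin : ∀ e ∈ arcsOf P, c e0 ≤ c e)
    (X : V → Prop) (hs : X s) (ht : ¬ X t)
    (hXP : ∀ e ∈ arcsOf P, X e.1 → ¬ X e.2 → e = e0)
    (hXQ : ∀ e ∈ arcsOf Q, X e.1 → ¬ X e.2 → e = e0) : False := by
  have hPE : arcsOf P ⊆ E := bx_arcs_sub hP.2.2.2
  have hQE : arcsOf Q ⊆ E := bx_arcs_sub hQ.2.2.2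
  have h1 : γ (arcsOf P ∪ arcsOf Q) ≤ c e0 := by
    refine bx_cut_one hγ (Finset.union_subset hPE hQE) X hs ht e0 (hPE he0) ?_
    intro e he
    rcases Finset.mem_union.1 he with he | he
    · exact hXP e he
    · exact hXQ e he
  have h2 : c e0 ≤ γ (arcsOf P) :=
    bx_path_ge hst hc hγ hP _ (hc _ (hPE he0)).le hmin
  obtain ⟨l, x, y, z, p, q, rfl, rfl, hyz⟩ := bx_split P Q s t hP.1 hQ.1 hP.2.1 hQ.2.1
    hP.2.2.1 hQ.2.2.1 hne
  have h3 : γ (arcsOf (l ++ x :: y :: p) ∩ arcsOf (l ++ x :: z :: q)) ≤ 0 := by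
    refine bx_cut_zero hγ (Finset.inter_subset_left.trans hPE) (fun v => v ∈ l ++ [x])
      (bx_s_mem hP.2.1) (bx_t_not hP.1 hP.2.2.1) ?_
    rintro ⟨a, b⟩ hab ha
    by_contra hb
    rw [Finset.mem_inter] at hab
    have e1 := bx_cross' hP.1 hab.1 ha hb
    have e2 := bx_cross' hQ.1 hab.2 ha hb
    rw [e1] at e2
    exact hyz (congrArg Prod.snd e2)
  have h4 : 0 < γ (arcsOf (l ++ x :: z :: q)) := by
    obtain ⟨m, hm, hmm⟩ := Finset.exists_min_image (arcsOf (l ++ x :: z :: q)) c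
      ⟨(x, z), (bx_mem_arcs _ _ _).2 ⟨l, q, rfl⟩⟩
    exact (hc m (hQE hm)).trans_le (bx_path_ge hst hc hγ hQ _ (hc m (hQE hm)).le hmm)
  have h5 := bx_super hconv hPE hQE
  linarith

/-- last element satisfying a predicate -/
theorem bx_last {V : Type*} (p : V → Prop) (l : List V) (h : ∃ x ∈ l, p x) :
    ∃ r y w, l = r ++ y :: w ∧ p y ∧ ∀ x ∈ w, ¬ p x := by
  induction l with
  | nil => simp at h
  | cons a l ih =>
    by_cases hl : ∃ x ∈ l, p x
    · obtain ⟨r, y, w, e, h1, h2⟩ := ih hl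
      exact ⟨a :: r, y, w, by rw [e]; rfl, h1, h2⟩
    · push Not at hl
      obtain ⟨x, hx, hpx⟩ := h
      rcases List.mem_cons.1 hx with rfl | hx
      · exact ⟨[], x, l, rfl, hpx, hl⟩
      · exact absurd hpx (hl x hx)

/-- gluing -/
theorem bx_glue {V : Type*} {E : Finset (V × V)} {s t : V} {a a' w d : List V} {y : V}
    (h1 : IsPathList E s t (a ++ y :: d)) (h2 : IsPathList E s t (a' ++ y :: w))
    (hd : ∀ x ∈ w, x ∉ a) : IsPathList E s t (a ++ y :: w) := by
  obtain ⟨n1, s1, t1, c1⟩ := h1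
  obtain ⟨n2, s2, t2, c2⟩ := h2
  refine ⟨?_, ?_, ?_, ?_⟩
  · rw [List.nodup_append] at n1 n2 ⊢
    refine ⟨n1.1, n2.2.1, ?_⟩
    intro x hx z hz
    rcases List.mem_cons.1 hz with rfl | hz
    · exact n1.2.2 x hx z (by simp)
    · rintro rfl; exact hd x hz hx
  · cases a <;> simpa using s1
  · rw [List.getLast?_append_cons] at t2 ⊢; exact t2
  · have c1' := List.isChain_append.1 c1
    have c2' := List.isChain_append.1 c2
    refine List.isChain_append.2 ⟨c1'.1, c2'.2.1, ?_⟩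
    simpa using c1'.2.2

theorem bx_main {V : Type*} [Fintype V] [DecidableEq V] {E : Finset (V × V)} {c : V × V → ℝ}
    {s t : V} {γ : Finset (V × V) → ℝ} (hst : s ≠ t) (hc : ∀ e ∈ E, 0 < c e)
    (hγ : IsFlowGame E c s t γ) (hconv : GameConvex E γ) (n : ℕ) :
    ∀ (p1 p2 q1 q2 : List V) (u v : V), q2.length = n →
      IsPathList E s t (p1 ++ u :: v :: p2) → IsPathList E s t (q1 ++ u :: v :: q2) →
      p1 ++ u :: v :: p2 ≠ q1 ++ u :: v :: q2 →
      (∀ e ∈ arcsOf (p1 ++ u :: v :: p2), c (u, v) ≤ c e) → False := by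
  induction n using Nat.strong_induction_on with
  | _ n ih =>
  intro p1 p2 q1 q2 u v hn hP hQ hne hmin
  by_cases hcase : ∃ x ∈ v :: q2, x ∈ p1 ++ [u]
  · obtain ⟨r, y, w, hr, hy, hw⟩ := bx_last (fun x => x ∈ p1 ++ [u]) _ hcase
    obtain ⟨a, d, had⟩ := List.append_of_mem hy
    have hPeq : p1 ++ u :: v :: p2 = a ++ y :: (d ++ v :: p2) := by
      have : p1 ++ u :: v :: p2 = (p1 ++ [u]) ++ v :: p2 := by simp
      rw [this, had]; simp
    have hQeq : q1 ++ u :: v :: q2 = (q1 ++ u :: r) ++ y :: w := by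
      rw [hr]; simp
    have hA : IsPathList E s t (a ++ y :: w) := by
      refine bx_glue (a' := q1 ++ u :: r) (d := d ++ v :: p2) (hPeq ▸ hP) (hQeq ▸ hQ) ?_
      intro x hx hxa
      exact hw x hx (by rw [had]; simp [hxa])
    have htw : t ∈ y :: w := bx_t_mem hA.2.2.1
    have htn : t ∉ p1 ++ [u] := bx_t_not hP.1 hP.2.2.1
    have hyt : y ≠ t := fun h => htn (h ▸ hy)
    have hyu : y ≠ u := by
      rintro rfl
      refine bx_disj hQ.1 (x := y) (by simp) ?_
      rw [hr]; simp
    have hua : u ∉ a := by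
      intro hua
      have hnd : (a ++ y :: d).Nodup := by
        rw [← had]
        have : (p1 ++ [u] ++ v :: p2).Nodup := by simpa using hP.1
        exact (List.nodup_append.1 this).1
      have hud : u ∈ y :: d := bx_t_mem (l1 := a) (by rw [← had]; simp)
      exact (List.nodup_append.1 hnd).2.2 u hua u hud rfl
    have hAQ : a ++ y :: w ≠ q1 ++ u :: v :: q2 := by
      rw [hQeq]
      intro h
      have := List.append_cancel_right h
      exact hua (by rw [this]; simp)
    have hAP : a ++ y :: w ≠ p1 ++ u :: v :: p2 := by
      rw [hPeq]
      intro h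
      have h' := List.append_cancel_left h
      simp only [List.cons.injEq, true_and] at h'
      have hu : u ∈ y :: d := bx_t_mem (l1 := a) (by rw [← had]; simp)
      rcases List.mem_cons.1 hu with h1 | h1
      · exact hyu h1.symm
      · exact hw u (by rw [h']; simp [h1]) (by simp)
    obtain ⟨w0, ws, rfl⟩ : ∃ w0 ws, w = w0 :: ws := by
      cases w with
      | nil => simp at htw; exact absurd htw.symm hyt
      | cons w0 ws => exact ⟨w0, ws, rfl⟩
    obtain ⟨⟨x, x'⟩, hm, hmm⟩ := Finset.exists_min_image (arcsOf (a ++ y :: w0 :: ws)) c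
      ⟨(y, w0), (bx_mem_arcs _ _ _).2 ⟨a, ws, rfl⟩⟩
    obtain ⟨k1, k2, hk⟩ := (bx_mem_arcs _ _ _).1 hm
    -- where is the arc?
    rcases List.append_eq_append_iff.1 hk with ⟨m, hm1, hm2⟩ | ⟨m, hm1, hm2⟩
    · -- arc in the second part
      rw [hQeq] at hQ hAQ
      have hq : (q1 ++ u :: r) ++ y :: w0 :: ws = (q1 ++ u :: r ++ m) ++ x :: x' :: k2 := by
        rw [hm2]; simp
      rw [hk] at hA hAQ hmm
      rw [hq] at hQ hAQ
      refine ih k2.length ?_ k1 k2 _ k2 x x' rfl hA hQ hAQ hmm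
      have l1 := congrArg List.length hr
      have l2 := congrArg List.length hm2
      simp at l1 l2
      omega
    · -- arc starts in `a`
      cases m with
      | nil =>
        simp at hm1 hm2
        rw [hQeq] at hQ hAQ
        obtain ⟨rfl, rfl, rfl⟩ := hm2
        rw [← hm1] at hk
        refine ih k2.length ?_ a k2 _ k2 x x' rfl hA hQ hAQ hmm
        have l1 := congrArg List.length hr
        simp at l1
        omega
      | cons m0 m =>
        simp only [List.cons_append, List.cons.injEq] at hm2
        obtain ⟨rfl, hm2⟩ := hm2
        have hPk : ∃ k3, p1 ++ u :: v :: p2 = k1 ++ x :: x' :: k3 := by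
          rw [hPeq, hm1]
          cases m with
          | nil => simp at hm2; exact ⟨d ++ v :: p2, by simp [hm2.1]⟩
          | cons m1 m =>
            simp at hm2
            exact ⟨m ++ y :: (d ++ v :: p2), by simp [hm2.1]⟩
        obtain ⟨k3, hk3⟩ := hPk
        rw [hk3] at hP hAP
        rw [hk] at hA hAP hmm hm
        refine bx_key hst hc hγ hconv hA hP hAP (x, x') hm hmm (fun z => z ∈ k1 ++ [x])
          (bx_s_mem hA.2.1) (bx_t_not hA.1 hA.2.2.1) ?_ ?_
        · rintro ⟨z, z'⟩ hz h1 h2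
          exact bx_cross' hA.1 hz h1 h2
        · rintro ⟨z, z'⟩ hz h1 h2
          exact bx_cross' hP.1 hz h1 h2
  · push Not at hcase
    by_cases hpq : p2 = q2
    · subst hpq
      refine bx_key hst hc hγ hconv hP hQ hne (u, v) ((bx_mem_arcs _ _ _).2 ⟨p1, p2, rfl⟩) hmin
        (fun z => z ∉ v :: p2) (fun h => bx_disj hP.1 (bx_s_mem hP.2.1) h)
        (not_not.2 (bx_t_mem (l1 := p1 ++ [u]) (by simpa using hP.2.2.1))) ?_ ?_
      · rintro ⟨z, z'⟩ hz h1 h2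
        exact bx_cross hP.1 hz h1 (not_not.1 h2)
      · rintro ⟨z, z'⟩ hz h1 h2
        exact bx_cross hQ.1 hz h1 (not_not.1 h2)
    · have hR : IsPathList E s t (p1 ++ u :: v :: q2) := by
        refine bx_glue hP hQ ?_
        intro x hx hx'
        exact hcase x hx (by simp [hx'])
      refine bx_key hst hc hγ hconv hP hR (by simpa using hpq) (u, v)
        ((bx_mem_arcs _ _ _).2 ⟨p1, p2, rfl⟩) hmin
        (fun z => z ∈ p1 ++ [u]) (bx_s_mem hP.2.1) (bx_t_not hP.1 hP.2.2.1) ?_ ?_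
      · rintro ⟨z, z'⟩ hz h1 h2
        exact bx_cross' hP.1 hz h1 h2
      · rintro ⟨z, z'⟩ hz h1 h2
        exact bx_cross' hR.1 hz h1 h2

/-- Bottleneck exclusivity.  If every arc lies on some `s`-`t` path and
the flow game is convex, then every bottleneck arc belongs to exactly one `s`-`t` path. -/
theorem bottleneck_exclusivity
    {V : Type*} [Fintype V] [DecidableEq V]
    (E : Finset (V × V)) (c : V × V → ℝ) (s t : V) (γ : Finset (V × V) → ℝ)
    (hst : s ≠ t) (hc : ∀ e ∈ E, 0 < c e)
    (hγ : IsFlowGame E c s t γ)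
    (hcover : ∀ e ∈ E, ∃ P : Finset (V × V), IsSTPath E s t P ∧ e ∈ P)
    (hconv : GameConvex E γ) :
    ∀ b : V × V, IsBottleneck E c s t b →
      ∃! P : Finset (V × V), IsSTPath E s t P ∧ b ∈ P := by
  rintro ⟨u, v⟩ ⟨P, hP, hb, hcap⟩
  refine ⟨P, ⟨hP, hb⟩, ?_⟩
  rintro Q ⟨⟨lq, hlq, rfl⟩, hbQ⟩
  obtain ⟨lp, hlp, rfl⟩ := hP
  by_contra hne
  obtain ⟨p1, p2, rfl⟩ := (bx_mem_arcs _ _ _).1 hb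
  obtain ⟨q1, q2, rfl⟩ := (bx_mem_arcs _ _ _).1 hbQ
  refine bx_main hst hc hγ hconv _ p1 p2 q1 q2 u v rfl hlp hlq (fun h => hne (by rw [h])) ?_
  intro e he
  rw [hcap]
  exact csInf_le ((Finset.finite_toSet _).image c).bddBelow ⟨e, he, rfl⟩
end
end
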